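/- arXiv:2001.00052 — 3 statements merged into one kernel-verified Lean document; each statement's English description precedes it below -/
import Mathlib

section
/- Let G be a residually finite group with center Z(G). Then the intersection of N·Z(G) over all finite-index normal subgroups N of G equals Z(G), and consequently G/Z(G) is residually finite. -/
/-- A group is residually finite if homomorphisms to finite groups separate points. -/
def IsResiduallyFinite (G : Type*) [Group G] : Prop :=
  ∀ g : G, g ≠ 1 → ∃ (F : Type) (_ : Group F) (_ : Finite F) (f : G →* F), f g ≠ 1

section ProfiniteClosure

open Subgroup
open scoped commutatorElement

variable {G : Type*} [Group G]

theorem isResiduallyFinite_iff_residuallyFinite :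
    IsResiduallyFinite G ↔ Group.ResiduallyFinite G := by
  refine ⟨Group.residuallyFinite_of_forall_exists_finite_monoidHom, fun _ g hg ↦ ?_⟩
  obtain ⟨N, hgN⟩ := Group.exists_finiteIndexNormalSubgroup_notMem g hg
  -- A finite quotient of `G` need not live in `Type`, hence the `Shrink`.
  let e : G ⧸ N.toSubgroup ≃* Shrink.{0} (G ⧸ N.toSubgroup) := Shrink.mulEquiv.symm
  refine ⟨_, inferInstance, inferInstance, e.toMonoidHom.comp (QuotientGroup.mk' N.toSubgroup),
    fun hgone ↦ hgN ?_⟩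
  exact (QuotientGroup.eq_one_iff g).mp (e.map_eq_one_iff.mp hgone)

/-- The closure of a subgroup `K` in the profinite topology, whose basic neighbourhoods of `1` are
the finite-index normal subgroups. -/
def profiniteClosure (K : Subgroup G) : Subgroup G :=
  ⨅ N ∈ {N : Subgroup G | N.Normal ∧ N.FiniteIndex}, N ⊔ K

theorem mem_profiniteClosure_iff {K : Subgroup G} {g : G} :
    g ∈ profiniteClosure K ↔ ∀ N : FiniteIndexNormalSubgroup G, g ∈ N.toSubgroup ⊔ K := by
  simp only [profiniteClosure, mem_iInf]
  exact ⟨fun h N ↦ h N.toSubgroup ⟨N.isNormal', N.isFiniteIndex'⟩,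
    fun h N ⟨hnormal, hfinite⟩ ↦ h ⟨N, hnormal, hfinite⟩⟩

theorem le_profiniteClosure (K : Subgroup G) : K ≤ profiniteClosure K :=
  le_iInf₂ fun _ _ ↦ le_sup_right

theorem commutatorElement_mem_of_mem_sup_centralizer {N : Subgroup G} [N.Normal] {S : Set G}
    {g s : G} (hg : g ∈ N ⊔ centralizer S) (hs : s ∈ S) : ⁅g, s⁆ ∈ N := by
  obtain ⟨n, hn, c, hc, rfl⟩ := mem_sup_of_normal_left.mp hg
  have hcs : c * s * c⁻¹ = s := mul_inv_eq_of_eq_mul (mem_centralizer_iff.mp hc s hs).symm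
  have hcomm : ⁅n * c, s⁆ = n * (s * n⁻¹ * s⁻¹) := by
    calc ⁅n * c, s⁆ = n * (c * s * c⁻¹) * n⁻¹ * s⁻¹ := by group
      _ = n * (s * n⁻¹ * s⁻¹) := by rw [hcs]; group
  rw [hcomm]
  exact N.mul_mem hn (Normal.conj_mem ‹_› _ (N.inv_mem hn) s)

theorem profiniteClosure_centralizer [Group.ResiduallyFinite G] (S : Set G) :
    profiniteClosure (centralizer S) = centralizer S := by
  refine le_antisymm (fun g hg ↦ ?_) (le_profiniteClosure _)
  refine mem_centralizer_iff_commutator_eq_one'.mpr fun s hs ↦ ?_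
  exact Group.eq_one_iff_forall_finiteIndexNormalSubroup _ fun N ↦
    commutatorElement_mem_of_mem_sup_centralizer (mem_profiniteClosure_iff.mp hg N) hs

theorem profiniteClosure_center [Group.ResiduallyFinite G] :
    profiniteClosure (center G) = center G := by
  rw [← centralizer_univ, profiniteClosure_centralizer]

theorem mk_mem_map_mk'_iff {N K : Subgroup G} [K.Normal] {g : G} :
    (g : G ⧸ K) ∈ N.map (QuotientGroup.mk' K) ↔ g ∈ N ⊔ K := by
  rw [sup_comm, ← QuotientGroup.comap_map_mk', mem_comap, QuotientGroup.mk'_apply]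

theorem residuallyFinite_quotient_iff_profiniteClosure_eq {K : Subgroup G} [K.Normal] :
    Group.ResiduallyFinite (G ⧸ K) ↔ profiniteClosure K = K := by
  constructor
  · intro _
    refine le_antisymm (fun g hg ↦ ?_) (le_profiniteClosure K)
    rw [← QuotientGroup.eq_one_iff]
    refine Group.eq_one_iff_forall_finiteIndexNormalSubroup _ fun H ↦ ?_
    have hK : K ≤ H.toSubgroup.comap (QuotientGroup.mk' K) := QuotientGroup.le_comap_mk' K _
    have hgH := mem_profiniteClosure_iff.mp hg (H.comap (QuotientGroup.mk' K))
    rwa [FiniteIndexNormalSubgroup.toSubgroup_comap, sup_eq_left.mpr hK] at hgH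
  · intro hK
    refine Group.residuallyFinite_iff_forall_finiteIndex.mpr fun x hx ↦ ?_
    obtain ⟨g, rfl⟩ := QuotientGroup.mk_surjective x
    rw [QuotientGroup.eq_one_iff, ← hK, mem_profiniteClosure_iff]
    intro N
    have : (N.toSubgroup.map (QuotientGroup.mk' K)).FiniteIndex :=
      ⟨ne_zero_of_dvd_ne_zero FiniteIndex.index_ne_zero
        (N.toSubgroup.index_map_dvd (QuotientGroup.mk'_surjective K))⟩
    exact mk_mem_map_mk'_iff.mp (hx _)

end ProfiniteClosure

/-- If `G` is residually finite, then the intersection of `N·Z(G)` over all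
finite-index normal subgroups `N` equals the center `Z(G)`, and `G/Z(G)` is
residually finite. -/
theorem center_inf_and_quotient_rf {G : Type*} [Group G]
    (hG : IsResiduallyFinite G) :
    (⨅ N ∈ {N : Subgroup G | N.Normal ∧ N.FiniteIndex}, N ⊔ Subgroup.center G)
        = Subgroup.center G ∧
      IsResiduallyFinite (G ⧸ Subgroup.center G) := by
  have : Group.ResiduallyFinite G := isResiduallyFinite_iff_residuallyFinite.mp hG
  refine ⟨profiniteClosure_center, ?_⟩
  rw [isResiduallyFinite_iff_residuallyFinite, residuallyFinite_quotient_iff_profiniteClosure_eq]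
  exact profiniteClosure_center
end

section
/- Let Γ be a group and N a central subgroup. If there exists g₀ ∈ Γ such that g₀^k ∉ N for all nonzero integers k, then the HNN-extension ⟨Γ, t | t⁻¹Nt = N, id⟩ embeds into the amalgamated free product Γ *_{N=N} Γ via the homomorphism sending t to the copy of g₀ in the second factor and each g ∈ Γ to its copy in the first factor. -/
open Monoid

/-!
The HNN extension `⟨Γ, t | t n t⁻¹ = α n⟩` is the amalgam `Γ *_N (N ⋊_α ℤ)`: the universal
properties give homomorphisms in both directions, and one composite fixes `Γ` and `t`.
If `g₀` induces `α` on `N` and no nonzero power of `g₀` lies in `N`, then `N ⋊_α ℤ` embeds into `Γ`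
as the subgroup generated by `N` and `g₀`, by an embedding that is the identity on `N`. Enlarging
the second factor along it preserves reduced words, so by the normal form theorem the induced map
`Γ *_N (N ⋊_α ℤ) → Γ *_N Γ` is injective. For central `N`, take `α = id`.
-/

section PushoutMap

variable {ι : Type*} {G G' : ι → Type*} [∀ i, Group (G i)] [∀ i, Group (G' i)]
  {H H' : Type*} [Group H] [Group H'] {φ : ∀ i, H →* G i} {φ' : ∀ i, H' →* G' i}

theorem transversal_eq_one_of_mem_range (d : PushoutI.NormalWord.Transversal φ) {i : ι} {g : G i}
    (hset : g ∈ d.set i) (hrange : g ∈ (φ i).range) : g = 1 := by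
  have heq := (d.compl i).injective
    (a₁ := (⟨g, hrange⟩, ⟨1, d.one_mem i⟩)) (a₂ := (⟨1, one_mem _⟩, ⟨g, hset⟩)) (by simp)
  exact congrArg (fun p => (p.1 : G i)) heq

theorem exists_eq_base_mul_reduced (hφ : ∀ i, Function.Injective (φ i)) (x : PushoutI φ) :
    ∃ (h : H) (w : CoprodI.Word G), PushoutI.Reduced φ w ∧
      x = PushoutI.base φ h * PushoutI.ofCoprodI w.prod := by
  classical
  obtain ⟨d⟩ := PushoutI.NormalWord.transversal_nonempty φ hφ
  obtain ⟨w, rfl⟩ := (PushoutI.NormalWord.equiv (d := d)).symm.surjective x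
  refine ⟨w.head, w.toWord, fun l hl hrange => w.ne_one l hl ?_, rfl⟩
  exact transversal_eq_one_of_mem_range d (w.normalized _ _ hl) hrange

/-- The homomorphism of amalgams induced by homomorphisms `f i` of the factors and `k` of the
amalgamated groups that commute with the structure maps. -/
def pushoutMap (f : ∀ i, G i →* G' i) (k : H →* H') (hfk : ∀ i, (f i).comp (φ i) = (φ' i).comp k) :
    PushoutI φ →* PushoutI φ' :=
  PushoutI.lift (fun i => (PushoutI.of i).comp (f i)) ((PushoutI.base φ').comp k) fun i => by
    rw [MonoidHom.comp_assoc, hfk, ← MonoidHom.comp_assoc, PushoutI.of_comp_eq_base]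

variable {f : ∀ i, G i →* G' i} {k : H →* H'}

@[simp]
theorem pushoutMap_of (hfk : ∀ i, (f i).comp (φ i) = (φ' i).comp k) (i : ι) (g : G i) :
    pushoutMap f k hfk (PushoutI.of i g) = PushoutI.of i (f i g) := by
  simp [pushoutMap]

@[simp]
theorem pushoutMap_base (hfk : ∀ i, (f i).comp (φ i) = (φ' i).comp k) (h : H) :
    pushoutMap f k hfk (PushoutI.base φ h) = PushoutI.base φ' (k h) := by
  simp [pushoutMap]

theorem exists_reduced_toList_eq_map (hrange : ∀ i, (φ' i).range.comap (f i) ≤ (φ i).range)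
    {w : CoprodI.Word G} (hw : PushoutI.Reduced φ w) :
    ∃ w' : CoprodI.Word G', PushoutI.Reduced φ' w' ∧
      w'.toList = w.toList.map fun l => ⟨l.1, f l.1 l.2⟩ := by
  have hred (l : Σ i, G' i) (hl : l ∈ w.toList.map fun l => ⟨l.1, f l.1 l.2⟩) :
      l.2 ∉ (φ' l.1).range := by
    intro hmem
    obtain ⟨l, hlw, rfl⟩ := List.mem_map.1 hl
    exact hw l hlw (hrange l.1 hmem)
  exact ⟨⟨_, fun l hl h => hred l hl (h ▸ one_mem _), (List.isChain_map _).2 w.chain_ne⟩, hred, rfl⟩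

theorem pushoutMap_ofCoprodI_prod (hfk : ∀ i, (f i).comp (φ i) = (φ' i).comp k)
    {w : CoprodI.Word G} {w' : CoprodI.Word G'}
    (hw' : w'.toList = w.toList.map fun l => ⟨l.1, f l.1 l.2⟩) :
    pushoutMap f k hfk (PushoutI.ofCoprodI w.prod) = PushoutI.ofCoprodI w'.prod := by
  simp [CoprodI.Word.prod, map_list_prod, hw', Function.comp_def]

theorem pushoutMap_injective (hfk : ∀ i, (f i).comp (φ i) = (φ' i).comp k)
    (hφ' : ∀ i, Function.Injective (φ' i)) (hk : Function.Injective k)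
    (hrange : ∀ i, (φ' i).range.comap (f i) ≤ (φ i).range) :
    Function.Injective (pushoutMap f k hfk) := by
  have hφ (i : ι) : Function.Injective (φ i) := by
    have hcomp : Function.Injective ((f i).comp (φ i)) := hfk i ▸ (hφ' i).comp hk
    exact .of_comp hcomp
  rw [injective_iff_map_eq_one]
  intro x hx
  obtain ⟨h, w, hw, rfl⟩ := exists_eq_base_mul_reduced hφ x
  obtain ⟨w', hw', hlist⟩ := exists_reduced_toList_eq_map hrange hw
  rw [map_mul, pushoutMap_base, pushoutMap_ofCoprodI_prod hfk hlist] at hx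
  have hw'_empty : w' = .empty :=
    hw'.eq_empty_of_mem_range hφ' ⟨(k h)⁻¹, by rw [map_inv, inv_eq_of_mul_eq_one_right hx]⟩
  obtain rfl : w = .empty := by
    rw [hw'_empty] at hlist
    exact CoprodI.Word.ext (List.map_eq_nil_iff.1 hlist.symm)
  have hkh : k h = 1 := PushoutI.base_injective hφ' (by simpa [hw'_empty] using hx)
  simp [(map_eq_one_iff k hk).1 hkh]

end PushoutMap

/-- The mapping torus `N ⋊_α ℤ` of an automorphism `α`, with `ℤ` written multiplicatively: the group
obtained from `N` by adjoining a stable letter of infinite order that acts on `N` as `α`. -/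
abbrev MappingTorus {N : Type*} [Group N] (α : N ≃* N) : Type _ :=
  N ⋊[zpowersHom (MulAut N) α] Multiplicative ℤ

namespace MappingTorus

variable {N K : Type*} [Group N] [Group K] {α : N ≃* N} {f : N →* K} {x : K}

/-- The generator of the factor `ℤ`, which conjugates `n : N` to `α n`. -/
def stableLetter (α : N ≃* N) : MappingTorus α :=
  SemidirectProduct.inr (Multiplicative.ofAdd 1)

theorem stableLetter_mul_inl (n : N) :
    stableLetter α * SemidirectProduct.inl n = SemidirectProduct.inl (α n) * stableLetter α := by
  ext <;> simp [stableLetter]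

theorem zpow_mul_map (hx : ∀ n, x * f n = f (α n) * x) (z : ℤ) (n : N) :
    x ^ z * f n = f (((α : MulAut N) ^ z) n) * x ^ z := by
  induction z generalizing n with
  | zero => simp
  | succ z ih => rw [zpow_add_one, zpow_add_one, mul_assoc, hx, ← mul_assoc, ih, mul_assoc]; rfl
  | pred z ih =>
    have hx_inv : x⁻¹ * f n = f (α.symm n) * x⁻¹ := by
      rw [inv_mul_eq_iff_eq_mul, ← mul_assoc, hx, α.apply_symm_apply, mul_inv_cancel_right]
    rw [zpow_sub_one, zpow_sub_one, mul_assoc, hx_inv, ← mul_assoc, ih, mul_assoc]; rfl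

/-- The universal property of the mapping torus: `f` on `N` together with an image `x` of the stable
letter. -/
def lift (f : N →* K) (x : K) (hx : ∀ n, x * f n = f (α n) * x) : MappingTorus α →* K :=
  SemidirectProduct.lift f (zpowersHom K x) fun z => by
    ext n
    simp [-map_zpow, zpow_mul_map hx]

theorem lift_apply (hx : ∀ n, x * f n = f (α n) * x) (y : MappingTorus α) :
    lift f x hx y = f y.left * x ^ y.right.toAdd :=
  rfl

@[simp]
theorem lift_inl (hx : ∀ n, x * f n = f (α n) * x) (n : N) :
    lift f x hx (SemidirectProduct.inl n) = f n := by
  simp [lift_apply]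

@[simp]
theorem lift_stableLetter (hx : ∀ n, x * f n = f (α n) * x) :
    lift f x hx (stableLetter α) = x := by
  simp [lift_apply, stableLetter]

theorem mem_range_inl_of_lift_mem_range (hx : ∀ n, x * f n = f (α n) * x)
    (hpow : ∀ z : ℤ, z ≠ 0 → x ^ z ∉ f.range) {y : MappingTorus α}
    (hy : lift f x hx y ∈ f.range) :
    y ∈ (SemidirectProduct.inl : N →* MappingTorus α).range := by
  have hmem : x ^ y.right.toAdd ∈ f.range :=
    (f.range.mul_mem_cancel_left ⟨y.left, rfl⟩).1 hy
  have hright : y.right = 1 := by_contra fun hne => hpow _ hne hmem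
  exact SemidirectProduct.range_inl_eq_ker_rightHom.ge hright

end MappingTorus

section HNN

universe u

variable {Γ : Type u} [Group Γ] {N : Subgroup Γ} {K : Type*} [Group K]

/-- The factors `Γ` and `N ⋊_α ℤ` of the amalgam `Γ *_N (N ⋊_α ℤ)`. -/
def TorusFactor (α : N ≃* N) : Bool → Type u
  | false => Γ
  | true => MappingTorus α

instance (α : N ≃* N) : ∀ b, Group (TorusFactor α b)
  | false => inferInstanceAs (Group Γ)
  | true => inferInstanceAs (Group (MappingTorus α))

/-- The inclusions of `N` along which `Γ` and `N ⋊_α ℤ` are amalgamated. -/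
def torusFactorIncl (α : N ≃* N) : ∀ b, N →* TorusFactor α b
  | false => N.subtype
  | true => (SemidirectProduct.inl : N →* MappingTorus α)

/-- The amalgam `Γ *_N (N ⋊_α ℤ)`. -/
abbrev TorusAmalgam (α : N ≃* N) : Type u :=
  PushoutI (torusFactorIncl α)

namespace TorusAmalgam

variable {α : N ≃* N}

/-- The inclusion of the first factor. -/
def ofLeft : Γ →* TorusAmalgam α :=
  PushoutI.of (φ := torusFactorIncl α) false

/-- The inclusion of the second factor. -/
def ofTorus : MappingTorus α →* TorusAmalgam α :=
  PushoutI.of (φ := torusFactorIncl α) true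

theorem ofTorus_inl (n : N) :
    ofTorus (SemidirectProduct.inl n : MappingTorus α) = ofLeft (n : Γ) :=
  (PushoutI.of_apply_eq_base (torusFactorIncl α) true n).trans
    (PushoutI.of_apply_eq_base (torusFactorIncl α) false n).symm

/-- A pair of homomorphisms on the factors as a family indexed by `Bool`. -/
def factorHom (f : Γ →* K) (g : MappingTorus α →* K) : ∀ b, TorusFactor α b →* K
  | false => f
  | true => g

/-- The universal property of `Γ *_N (N ⋊_α ℤ)`, in the form of that of the HNN extension: `f` on
`Γ` together with an image `x` of the stable letter. -/
def lift (f : Γ →* K) (x : K) (hx : ∀ n : N, x * f n = f (α n) * x) : TorusAmalgam α →* K :=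
  PushoutI.lift (factorHom f (MappingTorus.lift (f.comp N.subtype) x hx)) (f.comp N.subtype) fun
    | false => rfl
    | true => MonoidHom.ext (MappingTorus.lift_inl hx)

@[simp]
theorem lift_ofLeft {f : Γ →* K} {x : K} (hx : ∀ n : N, x * f n = f (α n) * x) (g : Γ) :
    lift f x hx (ofLeft g) = f g :=
  PushoutI.lift_of (φ := torusFactorIncl α) (i := false) _ _ _ g

@[simp]
theorem lift_ofTorus_stableLetter {f : Γ →* K} {x : K} (hx : ∀ n : N, x * f n = f (α n) * x) :
    lift f x hx (ofTorus (MappingTorus.stableLetter α)) = x :=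
  (PushoutI.lift_of (φ := torusFactorIncl α) (i := true) _ _ _ _).trans
    (MappingTorus.lift_stableLetter (f := f.comp N.subtype) hx)

/-- The homomorphism from the HNN extension that is the identity on `Γ` and matches the stable
letters. -/
def ofHNN : HNNExtension Γ N N α →* TorusAmalgam α :=
  HNNExtension.lift ofLeft (ofTorus (MappingTorus.stableLetter α)) fun n => by
    rw [← ofTorus_inl, ← ofTorus_inl, ← map_mul, ← map_mul, MappingTorus.stableLetter_mul_inl]

@[simp]
theorem ofHNN_of (g : Γ) : ofHNN (HNNExtension.of g : HNNExtension Γ N N α) = ofLeft g := by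
  simp [ofHNN]

@[simp]
theorem ofHNN_t :
    ofHNN (HNNExtension.t : HNNExtension Γ N N α) = ofTorus (MappingTorus.stableLetter α) := by
  simp [ofHNN]

theorem ofHNN_injective : Function.Injective (ofHNN : HNNExtension Γ N N α →* TorusAmalgam α) := by
  let toHNN : TorusAmalgam α →* HNNExtension Γ N N α :=
    lift HNNExtension.of HNNExtension.t HNNExtension.t_mul_of
  have toHNN_comp_ofHNN : toHNN.comp ofHNN = .id _ := by
    ext <;> simp [toHNN]
  exact Function.LeftInverse.injective (DFunLike.congr_fun toHNN_comp_ofHNN)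

variable {g₀ : Γ}

/-- The homomorphism from `Γ *_N (N ⋊_α ℤ)` to the double `Γ *_N Γ` that is the identity on the
first factor and sends the stable letter to `g₀` in the second. -/
def toDouble (hα : ∀ n : N, g₀ * n = α n * g₀) :
    TorusAmalgam α →* PushoutI (fun _ : Bool => N.subtype) :=
  pushoutMap (factorHom (.id Γ) (MappingTorus.lift N.subtype g₀ hα)) (.id N) fun
    | false => rfl
    | true => MonoidHom.ext (MappingTorus.lift_inl hα)

@[simp]
theorem toDouble_ofLeft (hα : ∀ n : N, g₀ * n = α n * g₀) (g : Γ) :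
    toDouble hα (ofLeft g) = PushoutI.of (φ := fun _ : Bool => N.subtype) false g :=
  pushoutMap_of (φ := torusFactorIncl α) _ false g

@[simp]
theorem toDouble_ofTorus_stableLetter (hα : ∀ n : N, g₀ * n = α n * g₀) :
    toDouble hα (ofTorus (MappingTorus.stableLetter α)) =
      PushoutI.of (φ := fun _ : Bool => N.subtype) true g₀ :=
  (pushoutMap_of (φ := torusFactorIncl α) _ true _).trans
    (congrArg _ (MappingTorus.lift_stableLetter (f := N.subtype) hα))

theorem toDouble_injective (hα : ∀ n : N, g₀ * n = α n * g₀)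
    (hg₀ : ∀ k : ℤ, k ≠ 0 → g₀ ^ k ∉ N) : Function.Injective (toDouble hα) := by
  refine pushoutMap_injective _ (fun _ => N.subtype_injective) Function.injective_id ?_
  rintro (_ | _) y hy
  · exact hy
  · exact MappingTorus.mem_range_inl_of_lift_mem_range hα (by simpa using hg₀) hy

end TorusAmalgam

end HNN

theorem hnn_embeds_into_central_amalgam_general
    {Γ : Type*} [Group Γ] (N : Subgroup Γ) (α : N ≃* N)
    (g₀ : Γ) (hα : ∀ n : N, g₀ * n = α n * g₀) (hg₀ : ∀ k : ℤ, k ≠ 0 → g₀ ^ k ∉ N) :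
    ∃ ψ : HNNExtension Γ N N α →* PushoutI (fun _ : Bool => N.subtype),
      Function.Injective ψ ∧
      (∀ g : Γ, ψ (HNNExtension.of g) = PushoutI.of (φ := fun _ : Bool => N.subtype) false g) ∧
      ψ HNNExtension.t = PushoutI.of (φ := fun _ : Bool => N.subtype) true g₀ := by
  refine ⟨(TorusAmalgam.toDouble hα).comp TorusAmalgam.ofHNN,
    (TorusAmalgam.toDouble_injective hα hg₀).comp TorusAmalgam.ofHNN_injective, fun g => ?_, ?_⟩
  · simp
  · simp

/-- Lemma (`HNNembeds` (i)): if `N` is a central subgroup of `Γ` and there is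
`g₀ ∈ Γ` with `g₀^k ∉ N` for all nonzero integers `k`, then the HNN-extension
`⟨Γ, t | t⁻¹Nt = N, id⟩` embeds into the amalgamated free product `Γ *_{N=N} Γ`
via the homomorphism sending `t` to the copy of `g₀` in the second factor and each
`g ∈ Γ` to its copy in the first factor. -/
theorem hnn_embeds_into_central_amalgam
    {Γ : Type*} [Group Γ] (N : Subgroup Γ) (hN : N ≤ Subgroup.center Γ)
    (g₀ : Γ) (hg₀ : ∀ k : ℤ, k ≠ 0 → g₀ ^ k ∉ N) :
    ∃ ψ : HNNExtension Γ N N (MulEquiv.refl N) →*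
        PushoutI (fun _ : Bool => N.subtype),
      Function.Injective ψ ∧
      (∀ g : Γ, ψ (HNNExtension.of g) = PushoutI.of (φ := fun _ : Bool => N.subtype) false g) ∧
      ψ HNNExtension.t = PushoutI.of (φ := fun _ : Bool => N.subtype) true g₀ := by
  exact hnn_embeds_into_central_amalgam_general N (.refl N) g₀
    (fun n => Subgroup.mem_center_iff.1 (hN n.2) g₀) hg₀
end

section
/- Let G be a countable discrete group and C a normal subgroup with G/C amenable, and let λ be a one-dimensional unitary character of C. Let Φ : C*(G) → A be a unital completely positive map into a unital C*-algebra with Φ(c) = λ(c)·1 for all c ∈ C. Then ‖Φ(f)‖ ≤ ‖Λ_{λ̃}(f)‖ for all f ∈ C*(G), where Λ_{λ̃} is the GNS representation of C*(G) associated to the extension by zero λ̃ of λ. -/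
open Filter
open scoped InnerProductSpace Classical

/-- A function `φ : G → ℂ` is positive definite if for every finite tuple of group
elements the matrix `[φ (s⁻¹ * t)]` is positive semidefinite. -/
def IsPositiveDefinite {G : Type*} [Group G] (φ : G → ℂ) : Prop :=
  ∀ (n : ℕ) (v : Fin n → G),
    letI := Complex.partialOrder
    Matrix.PosSemidef (Matrix.of fun i j : Fin n => φ ((v i)⁻¹ * v j))

/-!
The function `g ↦ Φ g` is an operator-valued positive definite function, and since `Φ c = λ(c)` is
unitary, `c` lies in the multiplicative domain of `Φ`: `Φ (g * c) = λ(c) Φ g`. For a finitely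
supported positive definite function `φ` on `G/C`, consider `g ↦ φ(gC) Φ g`. As a Schur product it
is again positive definite, so it extends to a unital map `Ψ` satisfying the Schwarz inequality. On
the other hand `Ψ` is a finite combination, over cosets `xC` in the support of `φ`, of the matrix
coefficients `f ↦ ⟪Λ x ξ, Λ f ξ⟫`, because `⟪Λ x ξ, Λ g ξ⟫ = λ̃(x⁻¹ g)` vanishes off `xC`. Hence `Ψ`
is bounded and kills the kernel of `Λ`, so `‖Ψ f‖² ≤ ‖Ψ (f⋆ f)‖ ≤ ‖Λ f‖²`. Now let `φ → 1`.
-/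

section DotProduct

variable {κ A : Type*} [Fintype κ]

theorem star_dotProduct_sub_mul_self [Ring A] [StarRing A] {x y : κ → A}
    (hx : star x ⬝ᵥ x = 1) :
    star (fun k => y k - x k * (star x ⬝ᵥ y)) ⬝ᵥ (fun k => y k - x k * (star x ⬝ᵥ y)) =
      star y ⬝ᵥ y - star (star x ⬝ᵥ y) * (star x ⬝ᵥ y) := by
  set a := star x ⬝ᵥ y with ha
  have hstar : star a = star y ⬝ᵥ x := by simp [ha, dotProduct]
  calc _ = star y ⬝ᵥ y - (star y ⬝ᵥ x) * a - star a * (star x ⬝ᵥ y)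
        + star a * (star x ⬝ᵥ x) * a := by
        simp only [dotProduct, Finset.sum_mul, Finset.mul_sum, ← Finset.sum_sub_distrib,
          ← Finset.sum_add_distrib]
        refine Finset.sum_congr rfl fun k _ => ?_
        simp only [Pi.star_apply, star_sub, star_mul]
        noncomm_ring
    _ = star y ⬝ᵥ y - star a * a := by
        rw [← hstar, ← ha, hx, mul_one, sub_add_cancel]

theorem star_dotProduct_self_nonneg [NonUnitalSemiring A] [StarRing A] [PartialOrder A]
    [StarOrderedRing A] (x : κ → A) : 0 ≤ star x ⬝ᵥ x :=
  Finset.sum_nonneg fun k _ => star_mul_self_nonneg (x k)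

theorem star_dotProduct_mul_self_le [Ring A] [StarRing A] [PartialOrder A] [StarOrderedRing A]
    {x y : κ → A} (hx : star x ⬝ᵥ x = 1) :
    star (star x ⬝ᵥ y) * (star x ⬝ᵥ y) ≤ star y ⬝ᵥ y := by
  rw [← sub_nonneg, ← star_dotProduct_sub_mul_self hx]
  exact star_dotProduct_self_nonneg _

theorem star_dotProduct_self_eq_zero [NonUnitalCStarAlgebra A] {x : κ → A} :
    star x ⬝ᵥ x = 0 ↔ x = 0 := by
  let _ : PartialOrder A := CStarAlgebra.spectralOrder A
  have _ : StarOrderedRing A := CStarAlgebra.spectralOrderedRing A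
  have hsum : ∑ k, star (x k) * x k = 0 ↔ ∀ k ∈ Finset.univ, star (x k) * x k = 0 :=
    Finset.sum_eq_zero_iff_of_nonneg fun k _ => star_mul_self_nonneg (x k)
  exact hsum.trans (by simp [funext_iff, CStarRing.star_mul_self_eq_zero_iff])

end DotProduct

/-- Operator-valued positive definite functions on a group: on each finite set `s`, the kernel
`F (g⁻¹ * h)` is the Gram matrix of vectors in a finite free Hilbert module `κ → A`. Over a
C⋆-algebra this is positivity of the matrices `F (g⁻¹ * h)`. -/
def IsPositiveDefiniteMap {G A : Type*} [Group G] [NonUnitalNonAssocSemiring A] [Star A]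
    (F : G → A) : Prop :=
  ∀ s : Finset G, ∃ (κ : Type) (_ : Fintype κ) (z : G → κ → A),
    ∀ g ∈ s, ∀ h ∈ s, F (g⁻¹ * h) = star (z g) ⬝ᵥ z h

namespace IsPositiveDefiniteMap

section Semiring

variable {G A : Type*} [Group G] [NonUnitalNonAssocSemiring A] [Star A]

theorem of_fin {F : G → A}
    (hF : ∀ (n : ℕ) (v : Fin n → G), ∃ z : Fin n → Fin n → A,
      ∀ i j, F ((v i)⁻¹ * v j) = star (z i) ⬝ᵥ z j) : IsPositiveDefiniteMap F := by
  intro s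
  obtain ⟨z, hz⟩ := hF s.card fun i => s.equivFin.symm i
  refine ⟨Fin s.card, inferInstance,
    fun g => if hg : g ∈ s then z (s.equivFin ⟨g, hg⟩) else 0, fun g hg h hh => ?_⟩
  simpa [hg, hh] using hz (s.equivFin ⟨g, hg⟩) (s.equivFin ⟨h, hh⟩)

theorem comp {H : Type*} [Group H] {F : H → A} (hF : IsPositiveDefiniteMap F) (f : G →* H) :
    IsPositiveDefiniteMap fun g => F (f g) := by
  intro s
  obtain ⟨κ, _, z, hz⟩ := hF (s.image f)
  refine ⟨κ, inferInstance, fun g => z (f g), fun g hg h hh => ?_⟩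
  simpa using hz _ (Finset.mem_image_of_mem f hg) _ (Finset.mem_image_of_mem f hh)

end Semiring

variable {G A : Type*} [Group G]

theorem smul {R : Type*} [Semiring R] [Star R] [NonUnitalNonAssocSemiring A] [Star A] [Module R A]
    [IsScalarTower R A A] [SMulCommClass R A A] [StarModule R A] {φ : G → R} {F : G → A}
    (hφ : IsPositiveDefiniteMap φ) (hF : IsPositiveDefiniteMap F) :
    IsPositiveDefiniteMap fun g => φ g • F g := by
  intro s
  obtain ⟨κ, _, m, hm⟩ := hφ s
  obtain ⟨κ', _, z, hz⟩ := hF s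
  refine ⟨κ × κ', inferInstance, fun g k => m g k.1 • z g k.2, fun g hg h hh => ?_⟩
  simp only [hm g hg h hh, hz g hg h hh, dotProduct, Fintype.sum_prod_type, Finset.sum_smul_sum,
    Pi.star_apply, star_smul, smul_mul_smul_comm]

theorem map_mul_of_star_mul_self_eq_one [CStarAlgebra A] {F : G → A}
    (hF : IsPositiveDefiniteMap F) (hF1 : F 1 = 1) {c : G} (hc : star (F c) * F c = 1) (g : G) :
    F (g * c) = F g * F c := by
  obtain ⟨κ, _, z, hz⟩ := hF {1, c, g⁻¹}
  have hz1 : star (z 1) ⬝ᵥ z 1 = 1 := by rw [← hz 1 (by simp) 1 (by simp)]; simpa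
  have hzc : star (z 1) ⬝ᵥ z c = F c := by rw [← hz 1 (by simp) c (by simp)]; simp
  have hcc : star (z c) ⬝ᵥ z c = 1 := by rw [← hz c (by simp) c (by simp)]; simpa
  have hcol : ∀ k, z c k = z 1 k * F c := by
    have hzero := star_dotProduct_sub_mul_self (y := z c) hz1
    rw [hzc, hcc, hc, sub_self, star_dotProduct_self_eq_zero] at hzero
    exact fun k => sub_eq_zero.1 (congrFun hzero k)
  calc F (g * c) = star (z g⁻¹) ⬝ᵥ z c := by rw [← hz g⁻¹ (by simp) c (by simp), inv_inv]
    _ = (star (z g⁻¹) ⬝ᵥ z 1) * F c := by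
        simp only [dotProduct, hcol, Finset.sum_mul, mul_assoc]
    _ = F g * F c := by rw [← hz g⁻¹ (by simp) 1 (by simp), inv_inv, mul_one]

variable {B : Type*} [CStarAlgebra B] [CStarAlgebra A] [PartialOrder A] [StarOrderedRing A]

theorem star_mul_self_le_of_mem_span {ι : G →* unitary B} {Ψ : B →ₗ[ℂ] A}
    (hΨ : IsPositiveDefiniteMap fun g => Ψ (ι g)) (hΨ1 : Ψ 1 = 1) {f : B}
    (hf : f ∈ Submodule.span ℂ (Set.range fun g : G => (ι g : B))) :
    star (Ψ f) * Ψ f ≤ Ψ (star f * f) := by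
  obtain ⟨a, rfl⟩ := Finsupp.mem_span_range_iff_exists_finsupp.1 hf
  obtain ⟨κ, _, z, hz⟩ := hΨ (insert 1 a.support)
  have hz1 : star (z 1) ⬝ᵥ z 1 = 1 := by
    simpa [hΨ1] using (hz 1 (by simp) 1 (by simp)).symm
  have hlinear : Ψ (a.sum fun g r => r • (ι g : B)) =
      star (z 1) ⬝ᵥ ∑ g ∈ a.support, a g • z g := by
    simp only [Finsupp.sum, map_sum, map_smul, dotProduct_sum, dotProduct_smul]
    refine Finset.sum_congr rfl fun g hg => ?_
    rw [← hz 1 (by simp) g (by simp [hg]), inv_one, one_mul]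
  have hquadratic : Ψ (star (a.sum fun g r => r • (ι g : B)) * a.sum fun g r => r • (ι g : B)) =
      star (∑ g ∈ a.support, a g • z g) ⬝ᵥ ∑ g ∈ a.support, a g • z g := by
    simp only [Finsupp.sum, star_sum, star_smul, Finset.sum_mul_sum, smul_mul_smul_comm, map_sum,
      map_smul, sum_dotProduct, smul_dotProduct]
    simp only [dotProduct_sum, dotProduct_smul, Finset.smul_sum, smul_smul]
    refine Finset.sum_congr rfl fun g hg => Finset.sum_congr rfl fun h hh => ?_
    rw [← hz g (by simp [hg]) h (by simp [hh])]
    simp [← Unitary.star_eq_inv]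
  rw [hquadratic, hlinear]
  exact star_dotProduct_mul_self_le hz1

theorem star_mul_self_le {ι : G →* unitary B}
    (hι : (Submodule.span ℂ (Set.range fun g : G => (ι g : B))).topologicalClosure = ⊤)
    {Ψ : B →L[ℂ] A} (hΨ : IsPositiveDefiniteMap fun g => Ψ (ι g)) (hΨ1 : Ψ 1 = 1) (f : B) :
    star (Ψ f) * Ψ f ≤ Ψ (star f * f) := by
  have hclosed : IsClosed {f | star (Ψ f) * Ψ f ≤ Ψ (star f * f)} :=
    isClosed_le (by fun_prop) (by fun_prop)
  exact (Submodule.dense_iff_topologicalClosure_eq_top.2 hι).induction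
    (fun _ hf => star_mul_self_le_of_mem_span (Ψ := Ψ.toLinearMap) hΨ hΨ1 hf) hclosed f

end IsPositiveDefiniteMap

theorem IsPositiveDefinite.isPositiveDefiniteMap {G : Type*} [Group G] {φ : G → ℂ}
    (hφ : IsPositiveDefinite φ) : IsPositiveDefiniteMap φ := by
  open scoped ComplexOrder MatrixOrder Matrix.Norms.L2Operator in
  refine .of_fin fun n v => ?_
  obtain ⟨m, hm⟩ := CStarAlgebra.nonneg_iff_eq_star_mul_self.1 (hφ n v).nonneg
  exact ⟨m.transpose, fun i j => congrFun (congrFun hm i) j⟩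

section CompletelyPositive

variable {A B : Type*} [CStarAlgebra A] [CStarAlgebra B]

/-- Complete positivity, phrased through the factorization `star z * z` of positive matrices over
a C⋆-algebra, so that no order on the matrix algebras enters. -/
def IsCompletelyPositive (Φ : B →ₗ[ℂ] A) : Prop :=
  ∀ (n : ℕ) (y : Matrix (Fin n) (Fin n) B),
    ∃ z : Matrix (Fin n) (Fin n) A, (star y * y).map Φ = star z * z

namespace IsCompletelyPositive

variable {Φ : B →ₗ[ℂ] A}

theorem exists_map_star_mul_eq_dotProduct (hΦ : IsCompletelyPositive Φ) {n : ℕ} (x : Fin n → B) :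
    ∃ z : Fin n → Fin n → A, ∀ i j, Φ (star (x i) * x j) = star (z i) ⬝ᵥ z j := by
  obtain _ | n := n
  · exact ⟨0, fun i => i.elim0⟩
  let y : Matrix (Fin (n + 1)) (Fin (n + 1)) B := Matrix.vecMulVec (Pi.single 0 1) x
  obtain ⟨z, hz⟩ := hΦ (n + 1) y
  refine ⟨z.transpose, fun i j => ?_⟩
  have hrow : (star y * y) i j = star (x i) * x j := by
    rw [Matrix.mul_apply, Finset.sum_eq_single 0] <;>
      simp +contextual [y, Matrix.vecMulVec_apply]
  rw [← hrow]
  exact congrFun (congrFun hz i) j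

theorem isPositiveDefiniteMap {G : Type*} [Group G] (hΦ : IsCompletelyPositive Φ)
    (ι : G →* unitary B) : IsPositiveDefiniteMap fun g => Φ (ι g) := by
  refine .of_fin fun n v => ?_
  obtain ⟨z, hz⟩ := hΦ.exists_map_star_mul_eq_dotProduct fun i => (ι (v i) : B)
  refine ⟨z, fun i j => ?_⟩
  simpa [← Unitary.star_eq_inv] using hz i j

theorem continuous (hΦ : IsCompletelyPositive Φ) : Continuous Φ := by
  let _ : PartialOrder B := CStarAlgebra.spectralOrder B
  have _ : StarOrderedRing B := CStarAlgebra.spectralOrderedRing B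
  let _ : PartialOrder A := CStarAlgebra.spectralOrder A
  have _ : StarOrderedRing A := CStarAlgebra.spectralOrderedRing A
  have hpos (x : B) (hx : 0 ≤ x) : 0 ≤ Φ x := by
    obtain ⟨b, rfl⟩ := CStarAlgebra.nonneg_iff_eq_star_mul_self.1 hx
    obtain ⟨z, hz⟩ := hΦ.exists_map_star_mul_eq_dotProduct fun _ : Fin 1 => b
    rw [hz 0 0]
    exact star_dotProduct_self_nonneg _
  exact map_continuous (PositiveLinearMap.mk₀ Φ hpos)

end IsCompletelyPositive

end CompletelyPositive

section Kernel

open scoped CStarAlgebra in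
theorem continuous_starAlgHom {B D : Type*} [CStarAlgebra B] [CStarAlgebra D] (π : B →⋆ₐ[ℂ] D) :
    Continuous π :=
  map_continuous (π : B →⋆ₙₐ[ℂ] D)

theorem nonneg_of_starAlgHom_nonneg {A B D : Type*} [NonUnitalCStarAlgebra B] [PartialOrder B]
    [StarOrderedRing B] [NonUnitalCStarAlgebra D] [PartialOrder D] [StarOrderedRing D]
    [AddCommGroup A] [Module ℂ A] [PartialOrder A] (π : B →⋆ₙₐ[ℂ] D) (Ψ : B →ₚ[ℂ] A)
    (hker : ∀ b, π b = 0 → Ψ b = 0) {b : B} (hb : IsSelfAdjoint b) (hπb : 0 ≤ π b) :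
    0 ≤ Ψ b := by
  have hneg : π b⁻ = 0 := by
    rw [CFC.negPart_def, NonUnitalStarAlgHom.map_cfcₙ π _ b (hφ := map_continuous π),
      ← CFC.negPart_def]
    exact (CFC.negPart_eq_zero_iff _ (hb.map π)).2 hπb
  have hpos : Ψ b = Ψ b⁺ := by
    rw [← sub_zero (Ψ b⁺), ← hker _ hneg, ← map_sub, CFC.posPart_sub_negPart b hb]
  exact hpos ▸ map_nonneg Ψ (CFC.posPart_nonneg b)

theorem norm_le_norm_of_star_mul_self_le {A B D : Type*} [CStarAlgebra B] [CStarAlgebra D]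
    [CStarAlgebra A] [PartialOrder A] [StarOrderedRing A] (π : B →⋆ₐ[ℂ] D) {Ψ : B →ₗ[ℂ] A}
    (hΨ1 : Ψ 1 = 1) (hΨ : ∀ f, star (Ψ f) * Ψ f ≤ Ψ (star f * f))
    (hker : ∀ f, π f = 0 → Ψ f = 0) (f : B) : ‖Ψ f‖ ≤ ‖π f‖ := by
  let _ : PartialOrder B := CStarAlgebra.spectralOrder B
  have _ : StarOrderedRing B := CStarAlgebra.spectralOrderedRing B
  let _ : PartialOrder D := CStarAlgebra.spectralOrder D
  have _ : StarOrderedRing D := CStarAlgebra.spectralOrderedRing D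
  have hpos (b : B) (hb : 0 ≤ b) : 0 ≤ Ψ b := by
    obtain ⟨c, rfl⟩ := CStarAlgebra.nonneg_iff_eq_star_mul_self.1 hb
    exact (star_mul_self_nonneg _).trans (hΨ c)
  set t : ℝ := ‖π f‖ ^ 2
  have hπ : 0 ≤ π (algebraMap ℝ B t - star f * f) := by
    have hbound : star (π f) * π f ≤ algebraMap ℝ D t :=
      CStarAlgebra.star_mul_le_algebraMap_norm_sq
    have hπt : π (algebraMap ℝ B t) = algebraMap ℝ D t := by
      rw [IsScalarTower.algebraMap_apply ℝ ℂ B, IsScalarTower.algebraMap_apply ℝ ℂ D,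
        AlgHomClass.commutes]
    simpa [map_star, hπt] using hbound
  have hΨf : Ψ (star f * f) ≤ algebraMap ℝ A t := by
    have hsa : IsSelfAdjoint (algebraMap ℝ B t - star f * f) :=
      (IsSelfAdjoint.algebraMap B (.all t)).sub (.star_mul_self f)
    have hΨnonneg : 0 ≤ Ψ (algebraMap ℝ B t - star f * f) :=
      nonneg_of_starAlgHom_nonneg (π : B →⋆ₙₐ[ℂ] D) (PositiveLinearMap.mk₀ Ψ hpos) hker hsa hπ
    simpa [Algebra.algebraMap_eq_smul_one, hΨ1] using hΨnonneg
  have hsq : ‖star (Ψ f) * Ψ f‖ ≤ t :=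
    (CStarAlgebra.norm_le_iff_le_algebraMap _ (by positivity)).2 ((hΨ f).trans hΨf)
  rw [CStarRing.norm_star_mul_self, ← sq] at hsq
  exact le_of_sq_le_sq hsq (norm_nonneg _)

end Kernel

section Truncation

variable {G : Type*} [Group G] {C : Subgroup G}

/-- The extension by zero `λ̃` of a function `λ` on the subgroup `C` to the whole group. -/
noncomputable def extendByZero (lam : C → ℂ) (g : G) : ℂ :=
  if h : g ∈ C then lam ⟨g, h⟩ else 0

theorem exists_clm_apply_eq_smul_of_inner_eq_extendByZero {A H : Type*} [NormedAddCommGroup A]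
    [NormedSpace ℂ A] [NormedAddCommGroup H] [InnerProductSpace ℂ H] {lam : C → ℂ} {F : G → A}
    (hF : ∀ (g : G) (c : C), F (g * c) = lam c • F g) {v : G → H}
    (hv : ∀ g h, ⟪v g, v h⟫_ℂ = extendByZero lam (g⁻¹ * h)) {φ : G ⧸ C → ℂ}
    (hφ : (Function.support φ).Finite) :
    ∃ T : H →L[ℂ] A, ∀ g : G, T (v g) = φ g • F g := by
  refine ⟨∑ x ∈ hφ.toFinset, (innerSL ℂ (v x.out)).smulRight (φ x • F x.out), fun g => ?_⟩
  have hmem (x : G ⧸ C) : x.out⁻¹ * g ∈ C ↔ x = g := by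
    rw [← QuotientGroup.eq, QuotientGroup.out_eq']
  simp only [sum_apply, ContinuousLinearMap.smulRight_apply, innerSL_apply_apply, hv]
  rw [Finset.sum_eq_single (g : G ⧸ C)]
  · have hg := (hmem g).2 rfl
    rw [extendByZero, dif_pos hg, smul_comm, ← hF, mul_inv_cancel_left]
  · intro x _ hx
    rw [extendByZero, dif_neg (mt (hmem x).1 hx), zero_smul]
  · intro hg
    simp [show φ g = 0 by simpa using hg]

variable {A B H : Type*} [CStarAlgebra A] [CStarAlgebra B] [NormedAddCommGroup H]
  [InnerProductSpace ℂ H] [CompleteSpace H]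

theorem inner_starAlgHom_unitary (π : B →⋆ₐ[ℂ] (H →L[ℂ] H)) (ι : G →* unitary B) (ξ : H)
    (g h : G) : ⟪π (ι g) ξ, π (ι h) ξ⟫_ℂ = ⟪ξ, π (ι (g⁻¹ * h)) ξ⟫_ℂ := by
  simp [← Unitary.star_eq_inv, map_star π, ContinuousLinearMap.star_eq_adjoint,
    ContinuousLinearMap.adjoint_inner_right]

theorem exists_norm_le_and_apply_eq_smul [C.Normal] {lam : C → ℂ} {ι : G →* unitary B}
    (hι : (Submodule.span ℂ (Set.range fun g : G => (ι g : B))).topologicalClosure = ⊤)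
    {F : G → A} (hF : IsPositiveDefiniteMap F) (hF1 : F 1 = 1)
    (hFC : ∀ (g : G) (c : C), F (g * c) = lam c • F g)
    (π : B →⋆ₐ[ℂ] (H →L[ℂ] H)) {ξ : H} (hξ : ∀ g, ⟪ξ, π (ι g) ξ⟫_ℂ = extendByZero lam g)
    {φ : G ⧸ C → ℂ} (hφ : IsPositiveDefinite φ) (hφfin : (Function.support φ).Finite)
    (hφ1 : φ 1 = 1) :
    ∃ Ψ : B →L[ℂ] A, (∀ f, ‖Ψ f‖ ≤ ‖π f‖) ∧ ∀ g : G, Ψ (ι g) = φ g • F g := by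
  let _ : PartialOrder A := CStarAlgebra.spectralOrder A
  have _ : StarOrderedRing A := CStarAlgebra.spectralOrderedRing A
  obtain ⟨T, hT⟩ := exists_clm_apply_eq_smul_of_inner_eq_extendByZero hFC
    (v := fun g => π (ι g) ξ) (fun g h => (inner_starAlgHom_unitary π ι ξ g h).trans (hξ _)) hφfin
  let Ψ : B →L[ℂ] A := T ∘L .apply ℂ H ξ ∘L ⟨π.toAlgHom.toLinearMap, continuous_starAlgHom π⟩
  have hΨ (g : G) : Ψ (ι g) = φ g • F g := hT g
  have hΨ1 : Ψ 1 = 1 := by simpa [hF1, hφ1] using hΨ 1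
  have hΨpd : IsPositiveDefiniteMap fun g => Ψ (ι g) := by
    simp only [hΨ]
    exact (hφ.isPositiveDefiniteMap.comp (QuotientGroup.mk' C)).smul hF
  have hΨker (f : B) (hf : π f = 0) : Ψ f = 0 := by
    change T (π f ξ) = 0
    simp [hf]
  exact ⟨Ψ, norm_le_norm_of_star_mul_self_le π (Ψ := Ψ.toLinearMap) hΨ1
    (hΨpd.star_mul_self_le hι hΨ1) hΨker, hΨ⟩

end Truncation

theorem norm_le_of_tendsto_of_dense_span {𝕜 E A J : Type*} [NormedField 𝕜] [AddCommGroup E]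
    [Module 𝕜 E] [TopologicalSpace E] [ContinuousAdd E] [ContinuousConstSMul 𝕜 E]
    [SeminormedAddCommGroup A] [NormedSpace 𝕜 A] {S : Set E}
    (hS : (Submodule.span 𝕜 S).topologicalClosure = ⊤) {Φ : E →ₗ[𝕜] A} (hΦ : Continuous Φ)
    {p : E → ℝ} (hp : Continuous p) {l : Filter J} [l.NeBot] {Ψ : J → E →ₗ[𝕜] A}
    (hΨ : ∀ j f, ‖Ψ j f‖ ≤ p f) (hlim : ∀ f ∈ S, Tendsto (fun j => Ψ j f) l (nhds (Φ f)))
    (f : E) :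
    ‖Φ f‖ ≤ p f := by
  have hspan (f : E) (hf : f ∈ Submodule.span 𝕜 S) : Tendsto (fun j => Ψ j f) l (nhds (Φ f)) := by
    induction hf using Submodule.span_induction with
    | mem f hf => exact hlim f hf
    | zero => simpa using tendsto_const_nhds
    | add f g _ _ hf hg => simpa using hf.add hg
    | smul a f _ hf => simpa using hf.const_smul a
  exact (Submodule.dense_iff_topologicalClosure_eq_top.2 hS).induction
    (fun f hf => le_of_tendsto (hspan f hf).norm (.of_forall fun j => hΨ j f))
    (isClosed_le hΦ.norm hp) f

theorem ucp_dominated_by_gns_of_induced_character_general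
    {G : Type*} [Group G] (C : Subgroup G) [C.Normal]
    (lam : C →* ℂ) (hlam : ∀ c : C, ‖lam c‖ = 1)
    {J : Type*} {l : Filter J} [l.NeBot] (φ : J → G ⧸ C → ℂ)
    (hφ : ∀ j, IsPositiveDefinite (φ j) ∧ (Function.support (φ j)).Finite ∧ φ j 1 = 1)
    (hφlim : ∀ x : G ⧸ C, Tendsto (fun j => φ j x) l (nhds 1))
    {B : Type*} [CStarAlgebra B] (ι : G →* unitary B)
    (hι : (Submodule.span ℂ (Set.range fun g : G => (ι g : B))).topologicalClosure = ⊤)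
    {H : Type*} [NormedAddCommGroup H] [InnerProductSpace ℂ H] [CompleteSpace H]
    (π : B →⋆ₐ[ℂ] (H →L[ℂ] H)) (ξ : H) (hξ : ∀ g, ⟪ξ, π (ι g) ξ⟫_ℂ = extendByZero lam g)
    {A : Type*} [CStarAlgebra A] (Φ : B →ₗ[ℂ] A) (hΦ1 : Φ 1 = 1) (hΦ : IsCompletelyPositive Φ)
    (hΦC : ∀ c : C, Φ (ι (c : G) : B) = lam c • (1 : A)) (f : B) :
    ‖Φ f‖ ≤ ‖π f‖ := by
  have hF : IsPositiveDefiniteMap fun g => Φ (ι g) := hΦ.isPositiveDefiniteMap ι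
  have hF1 : Φ (ι 1) = 1 := by simpa using hΦ1
  have hisometry (c : C) : star (Φ (ι (c : G))) * Φ (ι (c : G)) = 1 := by
    simp [hΦC, smul_smul, Complex.mul_conj', hlam]
  have hFC (g : G) (c : C) : Φ (ι (g * c)) = lam c • Φ (ι g) := by
    simpa [hΦC] using hF.map_mul_of_star_mul_self_eq_one hF1 (hisometry c) g
  choose Ψ hΨle hΨ using fun j =>
    exists_norm_le_and_apply_eq_smul hι hF hF1 hFC π hξ (hφ j).1 (hφ j).2.1 (hφ j).2.2
  have hlim (g : G) : Tendsto (fun j => Ψ j (ι g)) l (nhds (Φ (ι g))) := by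
    simpa [hΨ] using (hφlim g).smul_const (Φ (ι g))
  exact norm_le_of_tendsto_of_dense_span (Ψ := fun j => (Ψ j).toLinearMap) hι hΦ.continuous
    (continuous_starAlgHom π).norm hΨle (Set.forall_mem_range.2 hlim) f

/-- Theorem (`factorization`): let `G` be a countable discrete group, `C` a normal
subgroup with `G/C` amenable, and `λ` a one-dimensional unitary character of `C`.
For every unital completely positive map `Φ` from the full group C*-algebra `C*(G)`
(encoded by its universal property) into a unital C*-algebra `A` with
`Φ(c) = λ(c)·1` for `c ∈ C`, one has `‖Φ(f)‖ ≤ ‖Λ_{λ̃}(f)‖` for all `f ∈ C*(G)`,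
where `Λ_{λ̃}` is the GNS representation associated with the extension by zero `λ̃`
of `λ`. -/
theorem ucp_dominated_by_gns_of_induced_character
    {G : Type*} [Group G] [Countable G] (C : Subgroup G) [C.Normal]
    (lam : C →* ℂ) (hlam : ∀ c : C, ‖lam c‖ = 1)
    -- amenability of `G/C`: finitely supported positive-definite functions
    -- converge pointwise to `1`
    (hamen : ∃ φ : ℕ → (G ⧸ C → ℂ),
      (∀ n, IsPositiveDefinite (φ n) ∧ (Function.support (φ n)).Finite ∧ φ n 1 = 1) ∧
      ∀ x : G ⧸ C, Tendsto (fun n => φ n x) atTop (nhds 1))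
    -- the full group C*-algebra `CG = C*(G)`, via its universal property
    {CG : Type*} [CStarAlgebra CG] (ι : G →* unitary CG)
    (hdense : (Submodule.span ℂ (Set.range fun g : G => (ι g : CG))).topologicalClosure = ⊤)
    (huniv : ∀ (D : Type) (_ : CStarAlgebra D) (v : G →* unitary D),
      ∃ ψ : CG →⋆ₐ[ℂ] D, ∀ g : G, ψ (ι g) = v g)
    -- GNS representation of the state extending `λ` by zero
    {Hlam : Type*} [NormedAddCommGroup Hlam] [InnerProductSpace ℂ Hlam] [CompleteSpace Hlam]
    (Λ : CG →⋆ₐ[ℂ] (Hlam →L[ℂ] Hlam)) (ξ : Hlam) (hξ : ‖ξ‖ = 1)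
    (hcyc : (Submodule.span ℂ (Set.range fun a : CG => Λ a ξ)).topologicalClosure = ⊤)
    (hgns : ∀ g : G, ⟪ξ, Λ (ι g) ξ⟫_ℂ = if h : g ∈ C then lam ⟨g, h⟩ else 0)
    -- a unital completely positive map `Φ : C*(G) → A` with `Φ(c) = λ(c)·1`
    {A : Type*} [CStarAlgebra A] (Φ : CG →ₗ[ℂ] A) (hΦ1 : Φ 1 = 1)
    (hΦcp : ∀ (n : ℕ) (y : Matrix (Fin n) (Fin n) CG),
      ∃ z : Matrix (Fin n) (Fin n) A, (star y * y).map Φ = star z * z)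
    (hΦC : ∀ c : C, Φ (ι (c : G) : CG) = lam c • (1 : A)) :
    ∀ f : CG, ‖Φ f‖ ≤ ‖Λ f‖ := by
  obtain ⟨φ, hφ, hφlim⟩ := hamen
  exact ucp_dominated_by_gns_of_induced_character_general C lam hlam φ hφ hφlim ι hdense Λ ξ hgns
    Φ hΦ1 hΦcp hΦC
end
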